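/- Let ν be a real number with ν ≥ 1, and let 0 < a < b be two consecutive positive zeroes of J_ν (i.e. J_ν(a) = J_ν(b) = 0 and J_ν(z) ≠ 0 for all z with a < z < b). Then there exists exactly one z in the open interval (a, b) with J_{ν−1}(z) − J_ν(z) = 0. Conversely, if 0 < a < b are two consecutive positive zeroes of z ↦ J_{ν−1}(z) − J_ν(z), then there exists exactly one z in (a, b) with J_ν(z) = 0. -/

import Mathlib

/-- Bessel function of the first kind of real order `ν`, defined via its power series
`J_ν(z) = ∑ₘ (−1)^m / (m! Γ(ν+m+1)) (z/2)^(ν+2m)` (with real-exponent powers). -/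
noncomputable def besselJ (ν z : ℝ) : ℝ :=
  ∑' m : ℕ, ((-1 : ℝ) ^ m / (Nat.factorial m * Real.Gamma (ν + m + 1))) *
    (z / 2) ^ (ν + 2 * (m : ℝ))

/-- `x` (indexed by `k ≥ 1`) enumerates the positive zeroes of `f`: it is strictly
increasing on indices `k ≥ 1`, each `x k` is a positive zero of `f`, and every positive
zero of `f` is some `x k`. -/
def EnumPosZeros (f : ℝ → ℝ) (x : ℕ → ℝ) : Prop :=
  StrictMonoOn x (Set.Ici 1) ∧ (∀ k, 1 ≤ k → 0 < x k ∧ f (x k) = 0) ∧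
    ∀ z : ℝ, 0 < z → f z = 0 → ∃ k, 1 ≤ k ∧ x k = z

/-!
Write `f = J_ν`, `g = J_{ν-1} - t J_ν` and `G(z) = z² (f' g - f g')`. The terms in `t` cancel in the
Wronskian, and the recurrences `J_ν' = J_{ν-1} - (ν/z) J_ν`, `J_{ν-1}' = ((ν-1)/z) J_{ν-1} - J_ν`
give `G = z² (J_{ν-1}² + J_ν²) - (2ν-1) z J_{ν-1} J_ν` and `G' = z (J_{ν-1}² + J_ν²) ≥ 0`. For
`ν > 0` the leading term of `G` at `0` is positive, so `G > 0` on `(0, ∞)`: the Wronskian of `f` and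
`g` has no positive zero, and Rolle's theorem applied to `f / g` and `g / f` makes their zeroes
alternate.
-/

open Filter Topology
open scoped Nat

section Wronskian

variable {f g f' g' : ℝ → ℝ} {a b : ℝ}

theorem exists_eq_zero_of_wronskian_ne_zero (hab : a < b)
    (hf : ∀ z ∈ Set.Icc a b, HasDerivAt f (f' z) z) (hg : ∀ z ∈ Set.Icc a b, HasDerivAt g (g' z) z)
    (hW : ∀ z ∈ Set.Icc a b, f' z * g z - f z * g' z ≠ 0) (ha : f a = 0) (hb : f b = 0) :
    ∃ z ∈ Set.Ioo a b, g z = 0 := by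
  by_contra! hg_Ioo
  have hg_ne : ∀ z ∈ Set.Icc a b, g z ≠ 0 := by
    intro z hz hgz
    have hfz : f z ≠ 0 := fun hfz => hW z hz (by rw [hfz, hgz]; ring)
    have haz : a < z := hz.1.lt_of_ne fun h => hfz (h ▸ ha)
    have hzb : z < b := hz.2.lt_of_ne fun h => hfz (h ▸ hb)
    exact hg_Ioo z ⟨haz, hzb⟩ hgz
  have hquot : ∀ z ∈ Set.Icc a b,
      HasDerivAt (fun x => f x / g x) ((f' z * g z - f z * g' z) / g z ^ 2) z :=
    fun z hz => (hf z hz).fun_div (hg z hz) (hg_ne z hz)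
  obtain ⟨z, hz, hz_eq⟩ := exists_hasDerivAt_eq_zero hab
    (fun z hz => (hquot z hz).continuousAt.continuousWithinAt) (by simp only [ha, hb, zero_div])
    (fun z hz => hquot z (Set.Ioo_subset_Icc_self hz))
  have hz' := Set.Ioo_subset_Icc_self hz
  exact div_ne_zero (hW z hz') (pow_ne_zero 2 (hg_ne z hz')) hz_eq

theorem existsUnique_eq_zero_of_wronskian_ne_zero (hab : a < b)
    (hf : ∀ z ∈ Set.Icc a b, HasDerivAt f (f' z) z) (hg : ∀ z ∈ Set.Icc a b, HasDerivAt g (g' z) z)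
    (hW : ∀ z ∈ Set.Icc a b, f' z * g z - f z * g' z ≠ 0) (ha : f a = 0) (hb : f b = 0)
    (hf_ne : ∀ z ∈ Set.Ioo a b, f z ≠ 0) :
    ∃! z, z ∈ Set.Ioo a b ∧ g z = 0 := by
  have not_two_zeroes : ∀ x ∈ Set.Ioo a b, ∀ y ∈ Set.Ioo a b, g x = 0 → g y = 0 → ¬ x < y := by
    intro x hx y hy hgx hgy hxy
    have hsub : Set.Icc x y ⊆ Set.Icc a b := Set.Icc_subset_Icc hx.1.le hy.2.le
    obtain ⟨z, hz, hfz⟩ := exists_eq_zero_of_wronskian_ne_zero hxy (fun z hz => hg z (hsub hz))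
      (fun z hz => hf z (hsub hz)) (fun z hz h => hW z (hsub hz) (by linarith)) hgx hgy
    exact hf_ne z ⟨hx.1.trans hz.1, hz.2.trans hy.2⟩ hfz
  obtain ⟨z, hz, hgz⟩ := exists_eq_zero_of_wronskian_ne_zero hab hf hg hW ha hb
  refine ⟨z, ⟨hz, hgz⟩, fun y ⟨hy, hgy⟩ => ?_⟩
  exact le_antisymm (not_lt.mp (not_two_zeroes z hz y hy hgz hgy))
    (not_lt.mp (not_two_zeroes y hy z hz hgy hgz))

end Wronskian

section PowerSeries

variable {𝕜 : Type*} [NontriviallyNormedField 𝕜] {c : ℕ → 𝕜}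

theorem radius_ofScalars_eq_top_of_summable (hc : ∀ x : 𝕜, Summable fun n => c n * x ^ n) :
    (FormalMultilinearSeries.ofScalars 𝕜 c).radius = ⊤ := by
  refine ENNReal.eq_top_of_forall_nnreal_le fun r => ?_
  obtain ⟨x, hx⟩ := NormedField.exists_lt_norm 𝕜 r
  have hrx : (r : ENNReal) ≤ ‖x‖₊ := by exact_mod_cast hx.le
  refine hrx.trans (FormalMultilinearSeries.le_radius_of_tendsto _ (l := 0) ?_)
  simpa using (hc x).tendsto_atTop_zero.norm

theorem hasDerivAt_tsum_mul_pow [CompleteSpace 𝕜] (hc : ∀ x : 𝕜, Summable fun n => c n * x ^ n)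
    (x : 𝕜) :
    HasDerivAt (fun y => ∑' n, c n * y ^ n) (∑' n : ℕ, (n + 1) * c (n + 1) * x ^ n) x := by
  set p := FormalMultilinearSeries.ofScalars 𝕜 c
  have hp : p.radius = ⊤ := radius_ofScalars_eq_top_of_summable hc
  have hp' : p.derivSeries.radius = ⊤ := top_le_iff.mp (hp ▸ p.radius_le_radius_derivSeries)
  have hsum : p.sum = fun y => ∑' n, c n * y ^ n :=
    FormalMultilinearSeries.ofScalarsSum_eq_tsum c
  have hderiv : p.derivSeries.sum x 1 = ∑' n : ℕ, (n + 1) * c (n + 1) * x ^ n := by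
    have hs : HasSum (fun n => p.derivSeries n fun _ => x) (p.derivSeries.sum x) :=
      p.derivSeries.hasSum (by simp [hp'])
    refine (hs.mapL (ContinuousLinearMap.apply 𝕜 𝕜 (1 : 𝕜))).tsum_eq.symm.trans
      (tsum_congr fun n => ?_)
    simp [p, mul_comm]
  rw [← hsum, ← hderiv]
  exact (FormalMultilinearSeries.hasFDerivAt_sum (by simp [hp])).hasDerivAt

end PowerSeries

theorem inv_Gamma_eq_mul_inv_Gamma_add_one (s : ℝ) :
    (Real.Gamma s)⁻¹ = s * (Real.Gamma (s + 1))⁻¹ := by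
  rcases eq_or_ne s 0 with rfl | hs
  · simp [Real.Gamma_zero]
  · rw [Real.Gamma_add_one hs]
    field_simp

/-- The coefficients `1 / (m! Γ(ν+m+1))` of the Bessel–Clifford function. Mathlib's conventions
`Γ(-n) = 0` and `0⁻¹ = 0` give the value of the entire function `1 / Γ` at its zeroes. -/
noncomputable def besselCliffordCoeff (ν : ℝ) (m : ℕ) : ℝ :=
  (m ! * Real.Gamma (ν + m + 1))⁻¹

/-- The Bessel–Clifford function `C_ν(x) = ∑ₘ x^m / (m! Γ(ν+m+1))`, the entire factor in
`J_ν(z) = (z/2)^ν C_ν(-z²/4)`. -/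
noncomputable def besselClifford (ν x : ℝ) : ℝ :=
  ∑' m, besselCliffordCoeff ν m * x ^ m

theorem succ_mul_besselCliffordCoeff_succ (ν : ℝ) (m : ℕ) :
    (m + 1) * besselCliffordCoeff ν (m + 1) = besselCliffordCoeff (ν + 1) m := by
  have harg : ν + ((m + 1 : ℕ) : ℝ) + 1 = ν + 1 + m + 1 := by push_cast; ring
  rw [besselCliffordCoeff, besselCliffordCoeff, harg, Nat.factorial_succ]
  push_cast
  field_simp

theorem besselCliffordCoeff_sub_one (ν : ℝ) (m : ℕ) :
    besselCliffordCoeff (ν - 1) m = (ν + m) * besselCliffordCoeff ν m := by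
  have harg : ν - 1 + m + 1 = ν + m := by ring
  rw [besselCliffordCoeff, besselCliffordCoeff, harg, mul_inv, mul_inv,
    inv_Gamma_eq_mul_inv_Gamma_add_one]
  ring

theorem besselCliffordCoeff_eq_mul_succ (ν : ℝ) (m : ℕ) :
    besselCliffordCoeff ν m = (ν + 1 + m) * (m + 1) * besselCliffordCoeff ν (m + 1) := by
  rw [mul_assoc, succ_mul_besselCliffordCoeff_succ, ← besselCliffordCoeff_sub_one,
    add_sub_cancel_right]

theorem summable_besselCliffordCoeff_mul_pow (ν x : ℝ) :
    Summable fun m => besselCliffordCoeff ν m * x ^ m := by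
  have hlarge : ∀ᶠ m : ℕ in atTop, 2 * |x| ≤ ν + 1 + m :=
    (tendsto_atTop_add_const_left _ _ tendsto_natCast_atTop_atTop).eventually_ge_atTop _
  refine summable_of_ratio_norm_eventually_le one_half_lt_one (hlarge.mono fun m hm => ?_)
  have hratio : 2 * |x| ≤ |(ν + 1 + m) * (m + 1)| :=
    calc 2 * |x| ≤ |ν + 1 + m| := hm.trans (le_abs_self _)
      _ ≤ |ν + 1 + m| * |(m + 1 : ℝ)| :=
        le_mul_of_one_le_right (abs_nonneg _) ((by simp : (1 : ℝ) ≤ m + 1).trans (le_abs_self _))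
      _ = |(ν + 1 + m) * (m + 1)| := (abs_mul _ _).symm
  calc ‖besselCliffordCoeff ν (m + 1) * x ^ (m + 1)‖
      = 1 / 2 * (2 * |x| * |besselCliffordCoeff ν (m + 1) * x ^ m|) := by
        rw [pow_succ, ← mul_assoc, norm_mul, Real.norm_eq_abs, Real.norm_eq_abs]
        ring
    _ ≤ 1 / 2 * (|(ν + 1 + m) * (m + 1)| * |besselCliffordCoeff ν (m + 1) * x ^ m|) := by gcongr
    _ = 1 / 2 * ‖besselCliffordCoeff ν m * x ^ m‖ := by
        rw [← abs_mul, ← mul_assoc, ← besselCliffordCoeff_eq_mul_succ, Real.norm_eq_abs]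

theorem hasDerivAt_besselClifford (ν x : ℝ) :
    HasDerivAt (besselClifford ν) (besselClifford (ν + 1) x) x := by
  have h := hasDerivAt_tsum_mul_pow (summable_besselCliffordCoeff_mul_pow ν) x
  simp only [succ_mul_besselCliffordCoeff_succ] at h
  exact h

@[fun_prop]
theorem continuous_besselClifford (ν : ℝ) : Continuous (besselClifford ν) :=
  continuous_iff_continuousAt.2 fun x => (hasDerivAt_besselClifford ν x).continuousAt

theorem besselClifford_sub_one (ν x : ℝ) :
    besselClifford (ν - 1) x = ν * besselClifford ν x + x * besselClifford (ν + 1) x := by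
  have hν := (summable_besselCliffordCoeff_mul_pow ν x).hasSum
  have hshift : HasSum (fun m : ℕ => m * besselCliffordCoeff ν m * x ^ m)
      (x * besselClifford (ν + 1) x) := by
    rw [← hasSum_nat_add_iff' 1, Finset.sum_range_one, Nat.cast_zero, zero_mul, zero_mul, sub_zero]
    refine ((summable_besselCliffordCoeff_mul_pow (ν + 1) x).hasSum.mul_left x).congr_fun
      fun m => ?_
    rw [← succ_mul_besselCliffordCoeff_succ]
    push_cast
    ring
  refine (((hν.mul_left ν).add hshift).congr_fun fun m => ?_).tsum_eq
  rw [besselCliffordCoeff_sub_one]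
  ring

theorem besselClifford_zero_right (ν : ℝ) : besselClifford ν 0 = (Real.Gamma (ν + 1))⁻¹ := by
  rw [besselClifford, tsum_eq_single 0 fun m hm => by rw [zero_pow hm, mul_zero]]
  simp [besselCliffordCoeff]

section BesselJ

variable {ν z : ℝ}

theorem besselJ_eq_rpow_mul_besselClifford (ν : ℝ) (hz : 0 < z) :
    besselJ ν z = (z / 2) ^ ν * besselClifford ν (-z ^ 2 / 4) := by
  rw [besselJ, besselClifford, ← tsum_mul_left]
  refine tsum_congr fun m => ?_
  have hpow : (z / 2) ^ (ν + 2 * (m : ℝ)) = (z / 2) ^ ν * (z ^ 2 / 4) ^ m := by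
    rw [Real.rpow_add (by positivity), Real.rpow_mul (by positivity), Real.rpow_natCast,
      Real.rpow_ofNat]
    ring
  have hsign : (-z ^ 2 / 4) ^ m = (-1) ^ m * (z ^ 2 / 4) ^ m := by
    rw [← mul_pow]
    ring
  rw [hpow, hsign, besselCliffordCoeff]
  ring

theorem hasDerivAt_besselJ (ν : ℝ) (hz : 0 < z) :
    HasDerivAt (besselJ ν) (ν / z * besselJ ν z - besselJ (ν + 1) z) z := by
  have hz2 : 0 < z / 2 := by positivity
  have hrpow : HasDerivAt (fun x : ℝ => (x / 2) ^ ν) (1 / 2 * ν * (z / 2) ^ (ν - 1)) z :=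
    ((hasDerivAt_id z).div_const 2).rpow_const (Or.inl hz2.ne')
  have harg : HasDerivAt (fun x : ℝ => -x ^ 2 / 4) (-z / 2) z := by
    convert! ((hasDerivAt_pow 2 z).neg.div_const 4) using 1
    ring
  have hprod := hrpow.mul ((hasDerivAt_besselClifford ν _).comp z harg)
  refine (hprod.congr_of_eventuallyEq ?_).congr_deriv ?_
  · filter_upwards [lt_mem_nhds hz] with x hx
    exact besselJ_eq_rpow_mul_besselClifford ν hx
  · rw [besselJ_eq_rpow_mul_besselClifford _ hz, besselJ_eq_rpow_mul_besselClifford _ hz,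
      Real.rpow_sub_one hz2.ne', Real.rpow_add_one hz2.ne', Function.comp_apply]
    field_simp
    ring

theorem besselJ_sub_one_add_besselJ_add_one (ν : ℝ) (hz : 0 < z) :
    besselJ (ν - 1) z + besselJ (ν + 1) z = 2 * ν / z * besselJ ν z := by
  have hz2 : z / 2 ≠ 0 := by positivity
  simp only [besselJ_eq_rpow_mul_besselClifford _ hz]
  rw [besselClifford_sub_one, Real.rpow_sub_one hz2, Real.rpow_add_one hz2]
  field_simp
  ring

theorem hasDerivAt_besselJ_of_sub_one (ν : ℝ) (hz : 0 < z) :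
    HasDerivAt (besselJ ν) (besselJ (ν - 1) z - ν / z * besselJ ν z) z := by
  refine (hasDerivAt_besselJ ν hz).congr_deriv ?_
  linear_combination -besselJ_sub_one_add_besselJ_add_one ν hz

theorem hasDerivAt_besselJ_sub_one (ν : ℝ) (hz : 0 < z) :
    HasDerivAt (besselJ (ν - 1)) ((ν - 1) / z * besselJ (ν - 1) z - besselJ ν z) z := by
  simpa only [sub_add_cancel] using hasDerivAt_besselJ (ν - 1) hz

/-- `z²` times the Wronskian `J_ν' J_{ν-1} - J_ν J_{ν-1}'`, written without derivatives. The factor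
`z²` makes its derivative `z (J_{ν-1}² + J_ν²)`, so that it is monotone on `(0, ∞)`. -/
noncomputable def scaledBesselWronskian (ν z : ℝ) : ℝ :=
  z ^ 2 * (besselJ (ν - 1) z ^ 2 + besselJ ν z ^ 2) -
    (2 * ν - 1) * z * besselJ (ν - 1) z * besselJ ν z

theorem hasDerivAt_scaledBesselWronskian (ν : ℝ) (hz : 0 < z) :
    HasDerivAt (scaledBesselWronskian ν) (z * (besselJ (ν - 1) z ^ 2 + besselJ ν z ^ 2)) z := by
  have hlow := hasDerivAt_besselJ_sub_one ν hz
  have hJ := hasDerivAt_besselJ_of_sub_one ν hz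
  have h := ((hasDerivAt_pow 2 z).mul ((hlow.pow 2).add (hJ.pow 2))).sub
    ((((hasDerivAt_id z).const_mul (2 * ν - 1)).mul hlow).mul hJ)
  refine h.congr_deriv ?_
  simp only [Nat.cast_ofNat, Nat.add_one_sub_one, pow_one, Pi.add_apply, Pi.pow_apply, mul_one,
    id_eq, Pi.mul_apply]
  field_simp
  ring

theorem monotoneOn_scaledBesselWronskian (ν : ℝ) :
    MonotoneOn (scaledBesselWronskian ν) (Set.Ioi 0) := by
  have hderiv : ∀ z ∈ Set.Ioi (0 : ℝ), HasDerivAt (scaledBesselWronskian ν)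
      (z * (besselJ (ν - 1) z ^ 2 + besselJ ν z ^ 2)) z :=
    fun z hz => hasDerivAt_scaledBesselWronskian ν hz
  refine monotoneOn_of_hasDerivWithinAt_nonneg (convex_Ioi 0)
    (fun z hz => (hderiv z hz).continuousAt.continuousWithinAt)
    (fun z hz => (hderiv z (interior_subset hz)).hasDerivWithinAt) fun z hz => ?_
  have hz0 : 0 < z := interior_subset hz
  positivity

theorem eventually_scaledBesselWronskian_pos (hν : 0 < ν) :
    ∀ᶠ z in 𝓝[>] 0, 0 < scaledBesselWronskian ν z := by
  let C (μ z : ℝ) : ℝ := besselClifford μ (-z ^ 2 / 4)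
  let H (z : ℝ) : ℝ :=
    C (ν - 1) z ^ 2 + (z / 2) ^ 2 * C ν z ^ 2 - (ν - 1 / 2) * C (ν - 1) z * C ν z
  have hfactor : ∀ z > 0, scaledBesselWronskian ν z = (z * (z / 2) ^ (ν - 1)) ^ 2 * H z := by
    intro z hz
    have hz2 : z / 2 ≠ 0 := by positivity
    simp only [scaledBesselWronskian, besselJ_eq_rpow_mul_besselClifford _ hz, H, C,
      Real.rpow_sub_one hz2]
    field_simp
  have hH_zero : 0 < H 0 := by
    have hH : H 0 = ν / 2 * (Real.Gamma (ν + 1))⁻¹ ^ 2 := by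
      have harg : -(0 : ℝ) ^ 2 / 4 = 0 := by norm_num
      simp only [H, C, harg, besselClifford_sub_one, besselClifford_zero_right]
      ring
    have := Real.Gamma_pos_of_pos (add_pos hν one_pos)
    rw [hH]
    positivity
  have hH_cont : Continuous H := by fun_prop
  filter_upwards [nhdsWithin_le_nhds (hH_cont.tendsto 0 |>.eventually_const_lt hH_zero),
    self_mem_nhdsWithin] with z hHz (hz : 0 < z)
  rw [hfactor z hz]
  positivity

theorem scaledBesselWronskian_pos (hν : 0 < ν) (hz : 0 < z) : 0 < scaledBesselWronskian ν z := by
  obtain ⟨x, hx_pos, hx, hxz⟩ :=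
    ((eventually_scaledBesselWronskian_pos hν).and (Ioo_mem_nhdsGT hz)).exists
  exact hx_pos.trans_le (monotoneOn_scaledBesselWronskian ν hx hz hxz.le)

theorem wronskian_besselJ_eq_div (ν t : ℝ) (hz : 0 < z) :
    (besselJ (ν - 1) z - ν / z * besselJ ν z) * (besselJ (ν - 1) z - t * besselJ ν z) -
      besselJ ν z * ((ν - 1) / z * besselJ (ν - 1) z - besselJ ν z -
        t * (besselJ (ν - 1) z - ν / z * besselJ ν z)) = scaledBesselWronskian ν z / z ^ 2 := by
  rw [scaledBesselWronskian]
  field_simp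
  ring

end BesselJ

theorem stmt1_general (ν : ℝ) (hν : 0 < ν) (t : ℝ) :
    (∀ a b : ℝ, 0 < a → a < b → besselJ ν a = 0 → besselJ ν b = 0 →
      (∀ z : ℝ, a < z → z < b → besselJ ν z ≠ 0) →
      ∃! z : ℝ, z ∈ Set.Ioo a b ∧ besselJ (ν - 1) z - t * besselJ ν z = 0) ∧
    (∀ a b : ℝ, 0 < a → a < b →
      besselJ (ν - 1) a - t * besselJ ν a = 0 → besselJ (ν - 1) b - t * besselJ ν b = 0 →
      (∀ z : ℝ, a < z → z < b → besselJ (ν - 1) z - t * besselJ ν z ≠ 0) →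
      ∃! z : ℝ, z ∈ Set.Ioo a b ∧ besselJ ν z = 0) := by
  have hJ : ∀ z > 0, HasDerivAt (besselJ ν) _ z := fun z hz => hasDerivAt_besselJ_of_sub_one ν hz
  have hg : ∀ z > 0, HasDerivAt (fun z => besselJ (ν - 1) z - t * besselJ ν z) _ z :=
    fun z hz => (hasDerivAt_besselJ_sub_one ν hz).sub ((hJ z hz).const_mul t)
  have hW := fun z (hz : 0 < z) => (wronskian_besselJ_eq_div ν t hz).trans_ne
    (div_pos (scaledBesselWronskian_pos hν hz) (pow_pos hz 2)).ne'
  refine ⟨fun a b ha hab hJa hJb hne => ?_, fun a b ha hab hga hgb hne => ?_⟩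
  · exact existsUnique_eq_zero_of_wronskian_ne_zero hab (fun z hz => hJ z (ha.trans_le hz.1))
      (fun z hz => hg z (ha.trans_le hz.1)) (fun z hz => hW z (ha.trans_le hz.1)) hJa hJb
      fun z hz => hne z hz.1 hz.2
  · exact existsUnique_eq_zero_of_wronskian_ne_zero hab (fun z hz => hg z (ha.trans_le hz.1))
      (fun z hz => hJ z (ha.trans_le hz.1))
      (fun z hz h => hW z (ha.trans_le hz.1) (by linear_combination -h)) hga hgb
      fun z hz => hne z hz.1 hz.2

/-- For `ν ≥ 1`, between two consecutive positive zeroes of `J_ν` there is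
exactly one zero of `J_{ν−1} − J_ν`, and conversely. -/
theorem stmt1 (ν : ℝ) (hν : 1 ≤ ν) :
    (∀ a b : ℝ, 0 < a → a < b → besselJ ν a = 0 → besselJ ν b = 0 →
      (∀ z : ℝ, a < z → z < b → besselJ ν z ≠ 0) →
      ∃! z : ℝ, z ∈ Set.Ioo a b ∧ besselJ (ν - 1) z - besselJ ν z = 0) ∧
    (∀ a b : ℝ, 0 < a → a < b →
      besselJ (ν - 1) a - besselJ ν a = 0 → besselJ (ν - 1) b - besselJ ν b = 0 →
      (∀ z : ℝ, a < z → z < b → besselJ (ν - 1) z - besselJ ν z ≠ 0) →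
      ∃! z : ℝ, z ∈ Set.Ioo a b ∧ besselJ ν z = 0) := by
  simpa only [one_mul] using stmt1_general ν (zero_lt_one.trans_le hν) 1
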